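/- Let P_q be a Paley graph with q ≥ 25 and suppose α(P_q) < ⌊(√q+3)/2⌋. Then z_{ℓ(q)+1}(P_q) = z_{ℓ(q)}(P_q) = ϑ(P_q), where ℓ(q) = ⌊(√q+3)/2⌋; i.e., also adding exact subgraph constraints for all subgraphs of order ℓ(q)+1 does not improve the Lovász theta function. -/

import Mathlib

open scoped Classical

/-- The Paley graph on a finite field: vertices are field elements, two vertices
adjacent iff their difference is a nonzero square. -/
def Paley (F : Type) [Field F] : SimpleGraph F :=
  SimpleGraph.fromRel (fun x y => ∃ z : F, z ≠ 0 ∧ x - y = z ^ 2)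

/-- Feasibility for the SDP formulation ϑ₁:
max 1ᵀx s.t. [[X, x],[xᵀ,1]] ⪰ 0, diag(X) = x, X_{ij} = 0 on edges. -/
def Theta1Feasible {V : Type} [Fintype V] (G : SimpleGraph V)
    (x : V → ℝ) (X : Matrix V V ℝ) : Prop :=
  (Matrix.fromBlocks X (Matrix.of fun i (_ : Unit) => x i)
      (Matrix.of fun (_ : Unit) j => x j) 1).PosSemidef ∧
  (∀ i, X i i = x i) ∧ (∀ i j, G.Adj i j → X i j = 0)

/-- The squared stable set polytope STAB²(H): the convex hull of the outer
products ssᵀ of incidence vectors s of stable sets of H. -/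
def stab2 {W : Type} (H : SimpleGraph W) : Set (Matrix W W ℝ) :=
  convexHull ℝ {M | ∃ s : W → ℝ, (∀ i, s i = 0 ∨ s i = 1) ∧
    (∀ i j, H.Adj i j → s i * s j = 0) ∧ M = Matrix.vecMulVec s s}

/-- The optimal value z_J(G) of the ϑ₁ SDP with the exact subgraph constraint
added for every vertex subset I ∈ J. -/
noncomputable def zJ {V : Type} [Fintype V] (G : SimpleGraph V) (J : Set (Set V)) : ℝ :=
  sSup {t | ∃ (x : V → ℝ) (X : Matrix V V ℝ), Theta1Feasible G x X ∧
    (∀ I ∈ J, X.submatrix (fun a : I => (a : V)) (fun a : I => (a : V)) ∈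
      stab2 (G.induce I)) ∧
    t = ∑ i, x i}

/-- The k-th level z_k(G) of the exact subgraph hierarchy: exact subgraph
constraints for all k-element vertex subsets (with the convention
z_k(G) = z_n(G) for k > n). -/
noncomputable def zk {V : Type} [Fintype V] (G : SimpleGraph V) (k : ℕ) : ℝ :=
  zJ G {I : Set V | I.ncard = min k (Fintype.card V)}

/-- The Lovász theta function of a graph. -/
noncomputable def lovaszTheta {V : Type} [Fintype V] (G : SimpleGraph V) : ℝ :=
  sSup {t | ∃ X : Matrix V V ℝ, X.PosSemidef ∧ X.trace = 1 ∧
    (∀ i j, G.Adj i j → X i j = 0) ∧ t = ∑ i, ∑ j, X i j}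


/-- The stability number: the largest cardinality of a set of pairwise
non-adjacent vertices. -/
noncomputable def stabilityNumber {V : Type} (G : SimpleGraph V) : ℕ :=
  sSup {n | ∃ s : Finset V, (∀ a ∈ s, ∀ b ∈ s, ¬ G.Adj a b) ∧ s.card = n}

/-!
Let `S` be the Seidel matrix of a conference graph `G` on `n` vertices, so that `S² = n I - J`.
Then `S 1 = 0`, and `½ (I ± S / √n - J / n)` are orthogonal projections. Pairing one of them with
a matrix feasible for the theta function gives `ϑ(G) ≤ √n`; the other one shows that
`X = e I + 2 e² / (1 + e) A(Gᶜ)` with `e = 1 / √n`, whose trace is `√n`, is feasible.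

It remains to see that `X` satisfies every exact subgraph constraint on at most `ℓ + 1` vertices.
For `p, c ≥ 0`, the squares of the nonadjacent pairs of `H`, each with weight `c`, sum to
`p I + c A(Hᶜ)` up to a diagonal matrix, which is nonnegative as long as the degrees in `Hᶜ` are
at most `p / c`. Such a conic combination of stable squares lies in `STAB²(H)` once its trace is at
most `1`. In `X` the ratio `p / c = (√n + 1) / 2` is at least `ℓ - 1`, so this fails only
at isolated vertices of subgraphs of order `ℓ + 1`. If there is one, then, as there is no clique of
order `ℓ`, a maximum stable set `C` has at least three elements. Using the square of `C` in place of
all the pairs in `C` lowers the diagonal at the vertices of `C`, and no other vertex is isolated.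
-/

open Matrix Finset
open scoped Pointwise

section IndependentSets

variable {W : Type*} {H : SimpleGraph W}

/-- The graph of the pairs of distinct nonadjacent vertices of `H` that are not both contained in
`C`. -/
def complOutside (H : SimpleGraph W) (C : Finset W) : SimpleGraph W :=
  Hᶜ.deleteEdges C.sym2

theorem complOutside_le {C : Finset W} : complOutside H C ≤ Hᶜ :=
  SimpleGraph.deleteEdges_le _

theorem complOutside_adj {C : Finset W} {i j : W} :
    (complOutside H C).Adj i j ↔ Hᶜ.Adj i j ∧ ¬ (i ∈ C ∧ j ∈ C) := by
  rw [complOutside, SimpleGraph.deleteEdges_adj, mem_coe, mk_mem_sym2_iff]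

variable [Fintype W]

theorem three_le_indepNum (hω : H.cliqueNum + 2 ≤ Fintype.card W) {u : W}
    (hu : ∀ j, ¬ H.Adj u j) : 3 ≤ H.indepNum := by
  have herase : ¬ H.IsClique (univ.erase u : Finset W) := fun h ↦ by
    have := h.card_le_cliqueNum
    rw [card_erase_of_mem (mem_univ u), card_univ] at this
    omega
  obtain ⟨a, ha, b, hb, hab, hadj⟩ : ∃ a ≠ u, ∃ b ≠ u, a ≠ b ∧ ¬ H.Adj a b := by
    simpa [SimpleGraph.IsClique, Set.Pairwise] using herase
  have hind : H.IsIndepSet ({u, a, b} : Finset W) := by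
    simp [SimpleGraph.IsIndepSet, Set.pairwise_insert, hu, hadj, H.adj_comm _ u, H.adj_comm b a]
  calc 3 = #{u, a, b} := (card_eq_three.2 ⟨u, a, b, ha.symm, hb.symm, hab, rfl⟩).symm
    _ ≤ H.indepNum := hind.card_le_indepNum

theorem exists_isIndepSet_forall_exists_adj (hω : H.cliqueNum + 2 ≤ Fintype.card W) :
    ∃ C : Finset W, H.IsIndepSet C ∧ (C = ∅ ∨ 3 ≤ #C) ∧ ∀ i ∉ C, ∃ j, H.Adj i j := by
  by_cases! hiso : ∀ i, ∃ j, H.Adj i j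
  · exact ⟨∅, by simp, .inl rfl, fun i _ ↦ hiso i⟩
  obtain ⟨u, hu⟩ := hiso
  obtain ⟨C, hC, hCcard⟩ := H.exists_isNIndepSet_indepNum
  refine ⟨C, hC, .inr (hCcard ▸ three_le_indepNum hω hu), fun i hi ↦ ?_⟩
  by_contra! hnadj
  have hins : H.IsIndepSet (insert i C : Finset W) := by
    rw [coe_insert]
    exact hC.insert fun j _ _ ↦ ⟨hnadj j, fun h ↦ hnadj j h.symm⟩
  have := hins.card_le_indepNum
  rw [card_insert_of_notMem hi] at this
  omega

theorem degree_complOutside_le (C : Finset W) (i : W) :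
    (complOutside H C).degree i + H.degree i + 1 ≤ Fintype.card W := by
  have hle := SimpleGraph.degree_le_of_le (v := i) (complOutside_le (H := H) (C := C))
  have hlt := H.degree_lt_card_verts i
  rw [SimpleGraph.degree_compl] at hle
  omega

theorem degree_complOutside_add_card_le {C : Finset W} {i : W} (hi : i ∈ C) :
    (complOutside H C).degree i + #C ≤ Fintype.card W := by
  rw [← card_compl_add_card C, ← SimpleGraph.card_neighborFinset_eq_degree]
  refine Nat.add_le_add_right (card_le_card fun j hj ↦ mem_compl.2 fun hjC ↦ ?_) _
  rw [SimpleGraph.mem_neighborFinset, complOutside_adj] at hj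
  exact hj.2 ⟨hi, hjC⟩

theorem exists_isIndepSet_degree_complOutside_lt {l : ℕ} (hcard : Fintype.card W ≤ l + 1)
    (hω : H.cliqueNum < l) : ∃ C : Finset W, H.IsIndepSet C ∧
      ∀ i, (if i ∈ C then 1 else 0) + (complOutside H C).degree i < l := by
  obtain hle | heq := Nat.le_succ_iff.1 hcard
  · refine ⟨∅, by simp, fun i ↦ ?_⟩
    have := degree_complOutside_le (H := H) ∅ i
    simp only [notMem_empty, if_false]
    omega
  obtain ⟨C, hC, hC3, hCadj⟩ := exists_isIndepSet_forall_exists_adj (H := H) (by omega)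
  refine ⟨C, hC, fun i ↦ ?_⟩
  split_ifs with hi
  · have := degree_complOutside_add_card_le (H := H) hi
    have := hC3.resolve_left (ne_empty_of_mem hi)
    omega
  · have := degree_complOutside_le (H := H) C i
    have := (H.degree_pos_iff_exists_adj i).2 (hCadj i hi)
    omega

end IndependentSets

section StableSetPolytope

variable {W : Type} {H : SimpleGraph W}

/-- The outer products `ssᵀ` of the incidence vectors `s` of the stable sets of `H`: the generators
of the squared stable set polytope `stab2 H`. -/
def stableSquares (H : SimpleGraph W) : Set (Matrix W W ℝ) :=
  {M | ∃ s : W → ℝ, (∀ i, s i = 0 ∨ s i = 1) ∧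
    (∀ i j, H.Adj i j → s i * s j = 0) ∧ M = vecMulVec s s}

/-- The cone over the squared stable set polytope `stab2 H`. -/
def stableCone (H : SimpleGraph W) : PointedCone ℝ (Matrix W W ℝ) :=
  PointedCone.hull ℝ (stableSquares H)

theorem vecMulVec_mem_stableCone {s : W → ℝ} (hs : ∀ i, s i = 0 ∨ s i = 1)
    (hH : ∀ i j, H.Adj i j → s i * s j = 0) : vecMulVec s s ∈ stableCone H :=
  PointedCone.subset_hull ⟨s, hs, hH, rfl⟩

theorem zero_mem_stab2 : 0 ∈ stab2 H :=
  subset_convexHull ℝ _ ⟨0, by simp⟩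

theorem smul_mem_stab2 {M : Matrix W W ℝ} (hM : M ∈ stab2 H) {t : ℝ} (h0 : 0 ≤ t) (h1 : t ≤ 1) :
    t • M ∈ stab2 H :=
  (convex_convexHull ℝ _).smul_mem_of_zero_mem zero_mem_stab2 hM ⟨h0, h1⟩

theorem vecMulVec_indicator_mem_stableCone {S : Set W} (hS : H.IsIndepSet S) :
    vecMulVec (S.indicator 1) (S.indicator 1) ∈ stableCone H := by
  refine vecMulVec_mem_stableCone (fun i ↦ S.indicator_eq_zero_or_self 1 i) fun i j hij ↦ ?_
  by_cases hi : i ∈ S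
  · rw [Set.indicator_of_notMem fun hj ↦ hS hi hj hij.ne hij, mul_zero]
  · rw [Set.indicator_of_notMem hi, zero_mul]

theorem diagonal_mem_stableCone [Finite W] {d : W → ℝ} (hd : ∀ i, 0 ≤ d i) :
    diagonal d ∈ stableCone H := by
  cases nonempty_fintype W
  rw [← sum_single_eq_diagonal]
  refine sum_mem fun i _ ↦ ?_
  have hi : single i i (d i) =
      d i • vecMulVec (({i} : Set W).indicator 1) (({i} : Set W).indicator 1) := by
    simp [← single_eq_single_vecMulVec_single, smul_single]
  rw [hi]
  exact (stableCone H).smul_mem (hd i)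
    (vecMulVec_indicator_mem_stableCone (Set.pairwise_singleton i _))

variable [Fintype W]

theorem mem_trace_smul_stab2_of_mem_stableSquares {M : Matrix W W ℝ} (hM : M ∈ stableSquares H) :
    0 ≤ M.trace ∧ M ∈ M.trace • stab2 H := by
  have hM' : M ∈ stab2 H := subset_convexHull ℝ _ hM
  obtain ⟨s, hs01, -, rfl⟩ := hM
  obtain rfl | hs := eq_or_ne s 0
  · simpa using Set.smul_mem_smul_set (a := (0 : ℝ)) (zero_mem_stab2 (H := H))
  have htr : 1 ≤ (vecMulVec s s).trace := by
    obtain ⟨i, hi⟩ := Function.ne_iff.1 hs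
    rw [trace_vecMulVec]
    calc (1 : ℝ) = s i * s i := by rw [(hs01 i).resolve_left hi, one_mul]
      _ ≤ s ⬝ᵥ s := single_le_sum (f := fun i ↦ s i * s i)
          (fun i _ ↦ mul_self_nonneg (s i)) (mem_univ i)
  have hpos := zero_lt_one.trans_le htr
  refine ⟨hpos.le, (Set.mem_smul_set_iff_inv_smul_mem₀ hpos.ne' _ _).2 ?_⟩
  exact smul_mem_stab2 hM' (inv_nonneg.2 hpos.le) (inv_le_one_of_one_le₀ htr)

theorem mem_trace_smul_stab2_of_mem_stableCone {M : Matrix W W ℝ} (hM : M ∈ stableCone H) :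
    0 ≤ M.trace ∧ M ∈ M.trace • stab2 H := by
  induction hM using Submodule.span_induction with
  | mem M hM => exact mem_trace_smul_stab2_of_mem_stableSquares hM
  | zero => simpa using Set.smul_mem_smul_set (a := (0 : ℝ)) (zero_mem_stab2 (H := H))
  | add M N _ _ hM hN =>
    rw [trace_add]
    refine ⟨add_nonneg hM.1 hN.1, ?_⟩
    rw [stab2, (convex_convexHull ℝ _).add_smul hM.1 hN.1]
    exact Set.add_mem_add hM.2 hN.2
  | smul t M _ hM =>
    change 0 ≤ ((t : ℝ) • M).trace ∧ (t : ℝ) • M ∈ ((t : ℝ) • M).trace • stab2 H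
    rw [trace_smul, smul_assoc]
    exact ⟨smul_nonneg t.2 hM.1, Set.smul_mem_smul_set hM.2⟩

theorem mem_stab2_of_mem_stableCone {M : Matrix W W ℝ} (hM : M ∈ stableCone H)
    (htr : M.trace ≤ 1) : M ∈ stab2 H := by
  obtain ⟨h0, N, hN, hNM⟩ := mem_trace_smul_stab2_of_mem_stableCone hM
  exact hNM ▸ smul_mem_stab2 hN h0 htr

theorem incMatrix_mul_transpose_mem_stableCone {K : SimpleGraph W} (hK : K ≤ Hᶜ) :
    K.incMatrix ℝ * (K.incMatrix ℝ)ᵀ ∈ stableCone H := by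
  have hsum : K.incMatrix ℝ * (K.incMatrix ℝ)ᵀ =
      ∑ e, vecMulVec (fun a ↦ K.incMatrix ℝ a e) fun a ↦ K.incMatrix ℝ a e := by
    ext a b
    simp only [mul_apply, transpose_apply, Matrix.sum_apply, vecMulVec_apply]
  rw [hsum]
  refine sum_mem fun e _ ↦ vecMulVec_mem_stableCone (fun a ↦ ?_) fun a b hab ↦ ?_
  · rw [SimpleGraph.incMatrix_apply]
    exact Set.indicator_eq_zero_or_self _ 1 e
  · exact K.incMatrix_apply_mul_incMatrix_apply_of_not_adj hab.ne fun h ↦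
      (SimpleGraph.compl_adj _ _ _ |>.1 (hK h)).2 hab

theorem smul_one_add_smul_compl_adjMatrix_eq {C : Finset W} (hC : H.IsIndepSet C) (p c : ℝ) :
    p • (1 : Matrix W W ℝ) + c • Hᶜ.adjMatrix ℝ =
      c • vecMulVec ((C : Set W).indicator 1) ((C : Set W).indicator 1) +
        c • ((complOutside H C).incMatrix ℝ * ((complOutside H C).incMatrix ℝ)ᵀ) +
        diagonal fun i ↦ p - c * ((if i ∈ C then 1 else 0) + (complOutside H C).degree i) := by
  ext i j
  simp only [SimpleGraph.incMatrix_mul_transpose, Matrix.add_apply, Matrix.smul_apply,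
    vecMulVec_apply, Set.indicator_apply, mem_coe, Pi.one_apply, of_apply, smul_eq_mul,
    SimpleGraph.adjMatrix_apply]
  obtain rfl | hij := eq_or_ne i j
  · simp only [one_apply_eq, SimpleGraph.irrefl, if_true, if_false, diagonal_apply_eq]
    split_ifs <;> ring
  · simp only [one_apply_ne hij, diagonal_apply_ne _ hij, hij, if_false, complOutside_adj]
    by_cases hi : i ∈ C <;> by_cases hj : j ∈ C
    · simp [hi, hj, hij, show ¬ H.Adj i j from hC hi hj hij]
    all_goals simp [hi, hj]

theorem smul_one_add_smul_compl_adjMatrix_mem_stab2 {C : Finset W} (hC : H.IsIndepSet C)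
    {p c : ℝ} (hc : 0 ≤ c) (hp : Fintype.card W * p ≤ 1)
    (hdeg : ∀ i, c * ((if i ∈ C then 1 else 0) + (complOutside H C).degree i) ≤ p) :
    p • (1 : Matrix W W ℝ) + c • Hᶜ.adjMatrix ℝ ∈ stab2 H := by
  refine mem_stab2_of_mem_stableCone ?_ ?_
  · rw [smul_one_add_smul_compl_adjMatrix_eq hC]
    refine add_mem (add_mem ?_ ?_) (diagonal_mem_stableCone fun i ↦ sub_nonneg.2 (hdeg i))
    · exact (stableCone H).smul_mem hc (vecMulVec_indicator_mem_stableCone hC)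
    · exact (stableCone H).smul_mem hc (incMatrix_mul_transpose_mem_stableCone complOutside_le)
  · simpa [trace_add, trace_smul, trace_one, mul_comm] using hp

theorem smul_one_add_smul_compl_adjMatrix_mem_stab2_of_cliqueNum_lt {l : ℕ}
    (hcard : Fintype.card W ≤ l + 1) (hω : H.cliqueNum < l) {p c : ℝ} (hc : 0 ≤ c)
    (hp : Fintype.card W * p ≤ 1) (hcp : c * (l - 1) ≤ p) :
    p • (1 : Matrix W W ℝ) + c • Hᶜ.adjMatrix ℝ ∈ stab2 H := by
  obtain ⟨C, hC, hdeg⟩ := exists_isIndepSet_degree_complOutside_lt hcard hω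
  refine smul_one_add_smul_compl_adjMatrix_mem_stab2 hC hc hp fun i ↦ ?_
  refine (mul_le_mul_of_nonneg_left ?_ hc).trans hcp
  rw [le_sub_iff_add_le]
  exact_mod_cast hdeg i

end StableSetPolytope

section Trace

variable {V : Type*} [Fintype V]

theorem one_dotProduct_mulVec_one (X : Matrix V V ℝ) : 1 ⬝ᵥ X *ᵥ 1 = ∑ i, ∑ j, X i j := by
  simp only [dotProduct, mulVec, Pi.one_apply, one_mul, mul_one]

theorem sum_sum_le_card_mul_trace {X : Matrix V V ℝ} (hX : X.PosSemidef) :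
    ∑ i, ∑ j, X i j ≤ Fintype.card V * X.trace := by
  have hpair (i j : V) : X i j ≤ (X i i + X j j) / 2 := by
    have hij := hX.dotProduct_mulVec_nonneg (Pi.single i 1 - Pi.single j 1)
    have hsymm : X j i = X i j := hX.isHermitian.apply i j
    simp only [star_trivial, mulVec_sub, mulVec_single, MulOpposite.op_one, one_smul,
      dotProduct_sub, sub_dotProduct, single_dotProduct, col_apply, one_mul] at hij
    linarith
  calc ∑ i, ∑ j, X i j ≤ ∑ i, ∑ j, (X i i + X j j) / 2 :=
        sum_le_sum fun i _ ↦ sum_le_sum fun j _ ↦ hpair i j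
    _ = Fintype.card V * X.trace := by
        simp only [← sum_div, sum_add_distrib, sum_const, card_univ, nsmul_eq_mul, ← mul_sum, trace,
          diag_apply]
        ring

theorem trace_vecMulVec_one_mul (X : Matrix V V ℝ) :
    (vecMulVec 1 1 * X).trace = ∑ i, ∑ j, X i j := by
  rw [vecMulVec_mul, trace_vecMulVec, dotProduct_comm, ← dotProduct_mulVec,
    one_dotProduct_mulVec_one]

theorem trace_adjMatrix_mul_eq_zero {G : SimpleGraph V} {X : Matrix V V ℝ}
    (hadj : ∀ i j, G.Adj i j → X i j = 0) :
    (G.adjMatrix ℝ * X).trace = 0 := by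
  refine sum_eq_zero fun i _ ↦ ?_
  rw [diag_apply, SimpleGraph.adjMatrix_mul_apply]
  exact sum_eq_zero fun j hj ↦ hadj j i ((G.mem_neighborFinset i j).1 hj).symm

theorem trace_mul_nonneg {A B : Matrix V V ℝ} (hA : A.PosSemidef) (hB : B.PosSemidef) :
    0 ≤ (A * B).trace := by
  obtain ⟨m, v, rfl⟩ := posSemidef_iff_eq_sum_vecMulVec.1 hA
  rw [Finset.sum_mul, trace_sum]
  refine sum_nonneg fun k _ ↦ ?_
  rw [vecMulVec_mul, trace_vecMulVec, dotProduct_comm, ← dotProduct_mulVec]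
  exact hB.dotProduct_mulVec_nonneg (v k)

end Trace

section Theta

variable {V : Type} [Fintype V] {G : SimpleGraph V} {x : V → ℝ} {X : Matrix V V ℝ}

theorem theta1Feasible_iff : Theta1Feasible G x X ↔
    (X - vecMulVec x x).PosSemidef ∧ (∀ i, X i i = x i) ∧ ∀ i j, G.Adj i j → X i j = 0 := by
  let : Invertible (1 : Matrix Unit Unit ℝ) := invertibleOne
  have hschur := PosDef.fromBlocks₂₂ X (replicateCol Unit x) (D := (1 : Matrix Unit Unit ℝ)) .one
  rw [inv_one, Matrix.mul_one, conjTranspose_replicateCol, star_trivial, ← vecMulVec_eq] at hschur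
  exact and_congr_left' hschur

namespace Theta1Feasible

theorem posSemidef (h : Theta1Feasible G x X) : X.PosSemidef := by
  simpa using (theta1Feasible_iff.1 h).1.add (posSemidef_vecMulVec_self_star x)

theorem trace_eq_sum (h : Theta1Feasible G x X) : X.trace = ∑ i, x i :=
  sum_congr rfl fun i _ ↦ h.2.1 i

theorem sq_sum_le_sum_sum (h : Theta1Feasible G x X) : (∑ i, x i) ^ 2 ≤ ∑ i, ∑ j, X i j := by
  have hone := (theta1Feasible_iff.1 h).1.dotProduct_mulVec_nonneg 1
  rw [star_trivial, one_dotProduct_mulVec_one] at hone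
  simp only [Matrix.sub_apply, vecMulVec_apply, sum_sub_distrib, ← sum_mul_sum] at hone
  linarith

end Theta1Feasible

theorem lovaszTheta_nonneg : 0 ≤ lovaszTheta G := by
  refine Real.sSup_nonneg ?_
  rintro _ ⟨X, hX, -, -, rfl⟩
  rw [← one_dotProduct_mulVec_one]
  simpa using hX.dotProduct_mulVec_nonneg 1

theorem sum_sum_le_lovaszTheta_mul_trace (hX : X.PosSemidef)
    (hadj : ∀ i j, G.Adj i j → X i j = 0) :
    ∑ i, ∑ j, X i j ≤ lovaszTheta G * X.trace := by
  obtain htr | htr := hX.trace_nonneg.eq_or_lt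
  · simpa [← htr] using sum_sum_le_card_mul_trace hX
  rw [← div_le_iff₀ htr]
  refine le_csSup ⟨Fintype.card V, ?_⟩ ⟨X.trace⁻¹ • X, hX.smul (inv_nonneg.2 htr.le), ?_, ?_, ?_⟩
  · rintro _ ⟨Y, hY, hYtr, -, rfl⟩
    simpa [hYtr] using sum_sum_le_card_mul_trace hY
  · rw [trace_smul, smul_eq_mul, inv_mul_cancel₀ htr.ne']
  · intro i j hij
    rw [Matrix.smul_apply, hadj i j hij, smul_zero]
  · simp only [Matrix.smul_apply, smul_eq_mul, ← mul_sum, div_eq_inv_mul]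

theorem lovaszTheta_le {r : ℝ} (hr : 0 ≤ r) (h : ∀ X : Matrix V V ℝ, X.PosSemidef →
    (∀ i j, G.Adj i j → X i j = 0) → ∑ i, ∑ j, X i j ≤ r * X.trace) : lovaszTheta G ≤ r := by
  refine Real.sSup_le ?_ hr
  rintro _ ⟨X, hX, htr, hadj, rfl⟩
  simpa [htr] using h X hX hadj

theorem Theta1Feasible.sum_le_lovaszTheta (h : Theta1Feasible G x X) :
    ∑ i, x i ≤ lovaszTheta G := by
  have hsq : (∑ i, x i) ^ 2 ≤ lovaszTheta G * ∑ i, x i :=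
    h.trace_eq_sum ▸ h.sq_sum_le_sum_sum.trans (sum_sum_le_lovaszTheta_mul_trace h.posSemidef h.2.2)
  by_contra! hlt
  nlinarith [lovaszTheta_nonneg (G := G)]

theorem zJ_eq_lovaszTheta {J : Set (Set V)} (h : Theta1Feasible G x X)
    (hJ : ∀ I ∈ J, X.submatrix (fun a : I ↦ (a : V)) (fun a : I ↦ (a : V)) ∈ stab2 (G.induce I))
    (hx : lovaszTheta G ≤ ∑ i, x i) : zJ G J = lovaszTheta G := by
  refine IsGreatest.csSup_eq ⟨⟨x, X, h, hJ, hx.antisymm h.sum_le_lovaszTheta⟩, ?_⟩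
  rintro _ ⟨y, Y, hY, -, rfl⟩
  exact hY.sum_le_lovaszTheta

end Theta

section Seidel

variable {V : Type*} {G : SimpleGraph V}

/-- The Seidel matrix of `G`, with entries `-1` on the edges, `1` on the non-edges and `0` on the
diagonal. -/
noncomputable def seidelMatrix (G : SimpleGraph V) : Matrix V V ℝ :=
  Gᶜ.adjMatrix ℝ - G.adjMatrix ℝ

theorem isSymm_seidelMatrix : (seidelMatrix G).IsSymm :=
  Gᶜ.isSymm_adjMatrix.sub G.isSymm_adjMatrix

theorem adjMatrix_add_compl_adjMatrix :
    G.adjMatrix ℝ + Gᶜ.adjMatrix ℝ = vecMulVec 1 1 - 1 := by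
  rw [eq_sub_iff_add_eq]
  ext i j
  obtain rfl | hij := eq_or_ne i j
  · simp
  · by_cases h : G.Adj i j <;> simp [hij, h]

/-- For `e = ±1/√n` and a conference graph on `n` vertices, the orthogonal projection onto the
eigenspace of the Seidel matrix with eigenvalue `±√n`. -/
noncomputable def seidelProj (G : SimpleGraph V) (e : ℝ) : Matrix V V ℝ :=
  (1 / 2 : ℝ) • (1 + e • seidelMatrix G - e ^ 2 • vecMulVec 1 1)

theorem isSymm_seidelProj (e : ℝ) : (seidelProj G e).IsSymm := by
  simp only [seidelProj, IsSymm, transpose_smul, transpose_sub, transpose_add, transpose_one,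
    isSymm_seidelMatrix.eq, transpose_vecMulVec]

theorem two_smul_seidelProj_eq_sub (e : ℝ) : (2 : ℝ) • seidelProj G e =
    (1 - e) • (1 + e • vecMulVec 1 1) - (2 * e) • G.adjMatrix ℝ := by
  rw [seidelProj, seidelMatrix, eq_sub_of_add_eq' adjMatrix_add_compl_adjMatrix]
  module

theorem two_smul_seidelProj_eq_add (e : ℝ) : (2 : ℝ) • seidelProj G e =
    (1 + e) • (1 - e • vecMulVec 1 1) + (2 * e) • Gᶜ.adjMatrix ℝ := by
  rw [seidelProj, seidelMatrix, eq_sub_of_add_eq adjMatrix_add_compl_adjMatrix]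
  module

end Seidel

section ConferenceGraph

variable {V : Type*} [Fintype V] {G : SimpleGraph V}

/-- A conference graph: the eigenvalues of its Seidel matrix on the complement of the all-ones
vector are `±√n`, where `n` is the number of vertices. For `n > 1` these are the strongly regular
graphs with parameters `(n, (n - 1) / 2, (n - 5) / 4, (n - 1) / 4)`. -/
def IsConferenceGraph (G : SimpleGraph V) : Prop :=
  seidelMatrix G * seidelMatrix G = (Fintype.card V : ℝ) • 1 - vecMulVec 1 1

namespace IsConferenceGraph

theorem seidelMatrix_mulVec_one (hG : IsConferenceGraph G) : seidelMatrix G *ᵥ 1 = 0 := by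
  refine dotProduct_self_eq_zero.1 ?_
  calc (seidelMatrix G *ᵥ 1) ⬝ᵥ (seidelMatrix G *ᵥ 1)
      = 1 ⬝ᵥ ((seidelMatrix G * seidelMatrix G) *ᵥ 1) := by
        rw [← mulVec_mulVec, dotProduct_mulVec 1, ← mulVec_transpose, isSymm_seidelMatrix.eq]
    _ = 0 := by
        rw [hG, sub_mulVec, smul_mulVec, one_mulVec, vecMulVec_mulVec, one_dotProduct_one,
          op_smul_eq_smul, sub_self, dotProduct_zero]

theorem isIdempotentElem_seidelProj (hG : IsConferenceGraph G) {e : ℝ}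
    (he : e ^ 2 * Fintype.card V = 1) : IsIdempotentElem (seidelProj G e) := by
  set T := e • seidelMatrix G with hT
  set Q : Matrix V V ℝ := e ^ 2 • vecMulVec 1 1 with hQ
  have hTT : T * T = 1 - Q := by
    rw [hT, smul_mul_smul_comm, ← sq, hG, smul_sub, smul_smul, he, one_smul]
  have hTQ : T * Q = 0 := by
    rw [hT, hQ, smul_mul_smul_comm, mul_vecMulVec, hG.seidelMatrix_mulVec_one, zero_vecMulVec,
      smul_zero]
  have hQT : Q * T = 0 := by
    rw [hT, hQ, smul_mul_smul_comm, vecMulVec_mul, ← mulVec_transpose, isSymm_seidelMatrix.eq,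
      hG.seidelMatrix_mulVec_one, vecMulVec_zero, smul_zero]
  have hQQ : Q * Q = Q := by
    rw [hQ, smul_mul_smul_comm, vecMulVec_mul_vecMulVec, one_dotProduct_one, vecMulVec_smul,
      smul_smul, mul_assoc, he, mul_one]
  have hP : seidelProj G e = (1 / 2 : ℝ) • (1 + T - Q) := rfl
  rw [IsIdempotentElem, hP, smul_mul_smul_comm]
  simp only [mul_add, add_mul, mul_sub, sub_mul, mul_one, one_mul, hTT, hTQ, hQT, hQQ]
  module

theorem posSemidef_seidelProj (hG : IsConferenceGraph G) {e : ℝ}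
    (he : e ^ 2 * Fintype.card V = 1) : (seidelProj G e).PosSemidef := by
  rw [← (hG.isIdempotentElem_seidelProj he).eq]
  nth_rw 2 [← (isSymm_seidelProj e).eq]
  exact posSemidef_self_mul_conjTranspose _

theorem mul_sum_sum_le_trace (hG : IsConferenceGraph G) {e : ℝ} (he0 : 0 < e)
    (he : e ^ 2 * Fintype.card V = 1) {X : Matrix V V ℝ} (hX : X.PosSemidef)
    (hadj : ∀ i j, G.Adj i j → X i j = 0) : e * ∑ i, ∑ j, X i j ≤ X.trace := by
  have hP := trace_mul_nonneg (hG.posSemidef_seidelProj (e := -e) (by rwa [neg_sq])) hX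
  have htr : 2 * (seidelProj G (-e) * X).trace = (1 + e) * (X.trace - e * ∑ i, ∑ j, X i j) := by
    rw [← smul_eq_mul, ← trace_smul, ← smul_mul, two_smul_seidelProj_eq_sub, sub_mul, trace_sub,
      smul_mul, smul_mul, add_mul, smul_mul, trace_smul, trace_smul, trace_add, trace_smul,
      one_mul, trace_vecMulVec_one_mul, trace_adjMatrix_mul_eq_zero hadj,
      smul_eq_mul, smul_eq_mul, smul_zero]
    ring
  have hnonneg := nonneg_of_mul_nonneg_right (htr ▸ mul_nonneg zero_le_two hP) (by positivity)
  linarith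

end IsConferenceGraph

end ConferenceGraph

section ConferenceGraphTheta

variable {V : Type} [Fintype V] {G : SimpleGraph V}

namespace IsConferenceGraph

theorem lovaszTheta_le_card_mul (hG : IsConferenceGraph G) {e : ℝ} (he0 : 0 < e)
    (he : e ^ 2 * Fintype.card V = 1) : lovaszTheta G ≤ Fintype.card V * e := by
  refine lovaszTheta_le (by positivity) fun X hX hadj ↦ ?_
  calc ∑ i, ∑ j, X i j = Fintype.card V * e * (e * ∑ i, ∑ j, X i j) := by
        linear_combination (-∑ i, ∑ j, X i j) * he
    _ ≤ Fintype.card V * e * X.trace :=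
        mul_le_mul_of_nonneg_left (hG.mul_sum_sum_le_trace he0 he hX hadj) (by positivity)

theorem theta1Feasible (hG : IsConferenceGraph G) {e : ℝ} (he0 : 0 < e)
    (he : e ^ 2 * Fintype.card V = 1) :
    Theta1Feasible G (e • 1) (e • 1 + (2 * e ^ 2 / (1 + e)) • Gᶜ.adjMatrix ℝ) := by
  refine theta1Feasible_iff.2 ⟨?_, fun i ↦ by simp, fun i j hij ↦ by simp [hij, hij.ne]⟩
  have hgap : e • 1 + (2 * e ^ 2 / (1 + e)) • Gᶜ.adjMatrix ℝ - vecMulVec (e • 1) (e • 1) =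
      (e / (1 + e)) • (2 : ℝ) • seidelProj G e := by
    rw [two_smul_seidelProj_eq_add, smul_vecMulVec, vecMulVec_smul]
    match_scalars <;> field_simp
  rw [hgap]
  exact ((hG.posSemidef_seidelProj he).smul zero_le_two).smul (by positivity)

theorem zJ_eq_lovaszTheta (hG : IsConferenceGraph G) {l : ℕ}
    (hl : l + 1 ≤ √(Fintype.card V)) (hl2 : 2 * l ≤ √(Fintype.card V) + 3) (hω : G.cliqueNum < l)
    {J : Set (Set V)} (hJ : ∀ I ∈ J, I.ncard ≤ l + 1) : zJ G J = lovaszTheta G := by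
  set r := √(Fintype.card V) with hr
  have hr0 : 0 < r := by linarith [(Nat.cast_nonneg l : (0 : ℝ) ≤ l)]
  have he : r⁻¹ ^ 2 * Fintype.card V = 1 := by
    rw [← Real.sq_sqrt (Nat.cast_nonneg (Fintype.card V)), ← hr, ← mul_pow,
      inv_mul_cancel₀ hr0.ne', one_pow]
  refine _root_.zJ_eq_lovaszTheta (hG.theta1Feasible (inv_pos.2 hr0) he) (fun I hI ↦ ?_) ?_
  · have hsub : (r⁻¹ • 1 + (2 * r⁻¹ ^ 2 / (1 + r⁻¹)) • Gᶜ.adjMatrix ℝ).submatrix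
          (fun a : I ↦ (a : V)) (fun a : I ↦ (a : V)) =
        r⁻¹ • 1 + (2 * r⁻¹ ^ 2 / (1 + r⁻¹)) • (G.induce I)ᶜ.adjMatrix ℝ := by
      ext a b
      simp [one_apply, Subtype.ext_iff]
    have hcard : Fintype.card I ≤ l + 1 := by
      rw [Fintype.card_eq_nat_card, Nat.card_coe_set_eq]
      exact hJ I hI
    rw [hsub]
    convert smul_one_add_smul_compl_adjMatrix_mem_stab2_of_cliqueNum_lt hcard
      ((G.cliqueNum_induce_le I).trans_lt hω) (c := 2 * r⁻¹ ^ 2 / (1 + r⁻¹)) (by positivity) ?_ ?_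
    · rw [← div_eq_mul_inv, div_le_one hr0]
      refine le_trans ?_ hl
      exact_mod_cast hcard
    · field_simp
      linarith
  · simpa [mul_comm] using hG.lovaszTheta_le_card_mul (inv_pos.2 hr0) he

theorem zk_eq_lovaszTheta (hG : IsConferenceGraph G) {l k : ℕ}
    (hl : l + 1 ≤ √(Fintype.card V)) (hl2 : 2 * l ≤ √(Fintype.card V) + 3) (hω : G.cliqueNum < l)
    (hk : k ≤ l + 1) : zk G k = lovaszTheta G :=
  hG.zJ_eq_lovaszTheta hl hl2 hω fun _ hI ↦ hI.trans_le ((min_le_left _ _).trans hk)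

end IsConferenceGraph

end ConferenceGraphTheta

theorem cliqueNum_le_of_isContained {V W : Type*} [Finite W] {G : SimpleGraph V}
    {H : SimpleGraph W} (h : G.IsContained H) : G.cliqueNum ≤ H.cliqueNum := by
  obtain ⟨f⟩ := h
  obtain ⟨s, hs⟩ := G.exists_isNClique_cliqueNum
  have hle : G.map f.toEmbedding ≤ H :=
    (SimpleGraph.map_le_iff_le_comap _ _ _).2 fun _ _ hab ↦ f.toHom.map_adj hab
  have ht := (hs.map (f := f.toEmbedding)).mono hle
  exact ht.card_eq.symm.trans_le ht.isClique.card_le_cliqueNum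

theorem stabilityNumber_eq_indepNum {V : Type} (G : SimpleGraph V) :
    stabilityNumber G = G.indepNum := by
  have hind (s : Finset V) : (∀ a ∈ s, ∀ b ∈ s, ¬ G.Adj a b) ↔ G.IsIndepSet s :=
    ⟨fun h a ha b hb _ ↦ h a ha b hb, fun h a ha b hb hab ↦ h ha hb hab.ne hab⟩
  simp only [stabilityNumber, SimpleGraph.indepNum, SimpleGraph.isNIndepSet_iff, hind]

section Paley

variable {F : Type} [Field F] [Fintype F]

theorem quadraticChar_sub_comm (h : quadraticChar F (-1) = 1) (a b : F) :
    quadraticChar F (a - b) = quadraticChar F (b - a) := by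
  rw [← neg_sub b a, neg_eq_neg_one_mul, map_mul, h, one_mul]

theorem quadraticChar_neg_one_eq_one (hq : Fintype.card F % 4 = 1) :
    quadraticChar F (-1) = 1 := by
  rw [quadraticChar_one_iff_isSquare (neg_ne_zero.2 one_ne_zero), FiniteField.isSquare_neg_one_iff]
  omega

theorem ringChar_ne_two_of_card_mod_four_eq_one (hq : Fintype.card F % 4 = 1) :
    ringChar F ≠ 2 := fun h ↦ by
  have := FiniteField.even_card_of_char_two h
  omega

theorem quadraticChar_eq_one_iff_exists_sq (a : F) :
    quadraticChar F a = 1 ↔ ∃ z : F, z ≠ 0 ∧ a = z ^ 2 := by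
  refine ⟨fun h ↦ ?_, fun ⟨z, hz, h⟩ ↦ h ▸ quadraticChar_sq_one' hz⟩
  have ha : a ≠ 0 := fun ha ↦ by simp [ha] at h
  obtain ⟨z, rfl⟩ := (quadraticChar_one_iff_isSquare ha).1 h
  exact ⟨z, left_ne_zero_of_mul ha, (sq z).symm⟩

theorem sum_quadraticChar_sub_mul_quadraticChar_sub (hF : ringChar F ≠ 2) {i j : F} (hij : i ≠ j) :
    ∑ k, quadraticChar F (i - k) * quadraticChar F (k - j) = -quadraticChar F (-1) := by
  have hij0 : i - j ≠ 0 := sub_ne_zero.2 hij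
  have hJ := jacobiSum_nontrivial_inv (quadraticChar_ne_one hF)
  rw [(quadraticChar_isQuadratic F).inv] at hJ
  rw [← hJ, jacobiSum]
  refine (Fintype.sum_equiv ((Equiv.mulLeft₀ (i - j) hij0).trans (Equiv.addRight j)) _ _
    fun x ↦ ?_).symm
  have hi : i - ((i - j) * x + j) = (i - j) * (1 - x) := by ring
  simp only [Equiv.trans_apply, Equiv.mulLeft₀_apply, Equiv.coe_addRight, hi, add_sub_cancel_right,
    map_mul]
  linear_combination (-quadraticChar F x * quadraticChar F (1 - x)) * quadraticChar_sq_one hij0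

theorem sum_quadraticChar_sub_sq (i : F) :
    ∑ k, quadraticChar F (i - k) ^ 2 = Fintype.card F - 1 := by
  have hterm (k : F) : quadraticChar F (i - k) ^ 2 = 1 - if i = k then 1 else 0 := by
    obtain rfl | hik := eq_or_ne i k
    · simp
    · rw [quadraticChar_sq_one (sub_ne_zero.2 hik), if_neg hik, sub_zero]
  simp only [hterm, sum_sub_distrib, sum_const, card_univ, nsmul_one, sum_ite_eq, mem_univ, if_true]

variable (hq : Fintype.card F % 4 = 1)
include hq

theorem paley_adj_iff {a b : F} : (Paley F).Adj a b ↔ quadraticChar F (a - b) = 1 := by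
  simp only [Paley, SimpleGraph.fromRel_adj, ← quadraticChar_eq_one_iff_exists_sq,
    quadraticChar_sub_comm (quadraticChar_neg_one_eq_one hq) b a, or_self, and_iff_right_iff_imp]
  rintro h rfl
  simp at h

theorem compl_paley_adj_iff {a b : F} : (Paley F)ᶜ.Adj a b ↔ quadraticChar F (a - b) = -1 := by
  rw [SimpleGraph.compl_adj, paley_adj_iff hq]
  obtain rfl | hab := eq_or_ne a b
  · simp
  · rw [quadraticChar_eq_neg_one_iff_not_one (sub_ne_zero.2 hab)]
    exact and_iff_right hab

theorem seidelMatrix_paley_apply (a b : F) :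
    seidelMatrix (Paley F) a b = -(quadraticChar F (a - b) : ℝ) := by
  simp only [seidelMatrix, Matrix.sub_apply, SimpleGraph.adjMatrix_apply, compl_paley_adj_iff hq,
    paley_adj_iff hq]
  obtain hab | hab := eq_or_ne (a - b) 0
  · simp [hab]
  · obtain h | h := quadraticChar_dichotomy hab <;> norm_num [h]

theorem isConferenceGraph_paley : IsConferenceGraph (Paley F) := by
  have hχ := quadraticChar_neg_one_eq_one hq
  have hF := ringChar_ne_two_of_card_mod_four_eq_one hq
  ext i j
  simp only [mul_apply, seidelMatrix_paley_apply hq, neg_mul_neg]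
  obtain rfl | hij := eq_or_ne i j
  · simp only [quadraticChar_sub_comm hχ _ i, ← sq]
    simpa [vecMulVec_apply] using congrArg (Int.cast (R := ℝ)) (sum_quadraticChar_sub_sq i)
  · simpa [vecMulVec_apply, hij, hχ] using
      congrArg (Int.cast (R := ℝ)) (sum_quadraticChar_sub_mul_quadraticChar_sub hF hij)

theorem nonempty_paley_iso_compl : Nonempty (Paley F ≃g (Paley F)ᶜ) := by
  obtain ⟨a, ha⟩ := quadraticChar_exists_neg_one (ringChar_ne_two_of_card_mod_four_eq_one hq)
  have ha0 : a ≠ 0 := fun h ↦ by simp [h] at ha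
  refine ⟨⟨Equiv.mulLeft₀ a ha0, fun {x y} ↦ ?_⟩⟩
  change (Paley F)ᶜ.Adj (a * x) (a * y) ↔ (Paley F).Adj x y
  rw [paley_adj_iff hq, compl_paley_adj_iff hq, ← mul_sub, map_mul, ha, neg_one_mul, neg_inj]

theorem cliqueNum_paley_le_stabilityNumber :
    (Paley F).cliqueNum ≤ stabilityNumber (Paley F) := by
  obtain ⟨f⟩ := nonempty_paley_iso_compl hq
  rw [stabilityNumber_eq_indepNum, ← SimpleGraph.cliqueNum_compl]
  exact cliqueNum_le_of_isContained f.isContained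

end Paley

theorem stmt13_general {V : Type} [Fintype V] {G : SimpleGraph V} (hG : IsConferenceGraph G)
    (hcard : 25 ≤ Fintype.card V)
    (hω : (G.cliqueNum : ℤ) < ⌊(√(Fintype.card V) + 3) / 2⌋) :
    zk G (⌊(√(Fintype.card V) + 3) / 2⌋.toNat + 1) = zk G ⌊(√(Fintype.card V) + 3) / 2⌋.toNat ∧
      zk G ⌊(√(Fintype.card V) + 3) / 2⌋.toNat = lovaszTheta G := by
  have hr : 5 ≤ √(Fintype.card V) := Real.le_sqrt_of_sq_le (by exact_mod_cast hcard)
  have hfloor := Int.floor_le ((√(Fintype.card V) + 3) / 2)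
  obtain ⟨l, hl⟩ := Int.eq_ofNat_of_zero_le ((Nat.cast_nonneg G.cliqueNum).trans hω.le)
  rw [hl] at hω hfloor ⊢
  push_cast at hfloor
  have hz {k : ℕ} (hk : k ≤ l + 1) : zk G k = lovaszTheta G :=
    hG.zk_eq_lovaszTheta (by linarith) (by linarith) (by exact_mod_cast hω) hk
  exact ⟨(hz le_rfl).trans (hz l.le_succ).symm, hz l.le_succ⟩

theorem stmt13 (q : ℕ) (F : Type) [Field F] [Fintype F]
    (hcard : Fintype.card F = q) (hq : q % 4 = 1) (hq25 : 25 ≤ q)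
    (halpha : (stabilityNumber (Paley F) : ℤ) < ⌊(Real.sqrt q + 3) / 2⌋) :
    zk (Paley F) ((⌊(Real.sqrt q + 3) / 2⌋).toNat + 1) =
        zk (Paley F) (⌊(Real.sqrt q + 3) / 2⌋).toNat ∧
      zk (Paley F) (⌊(Real.sqrt q + 3) / 2⌋).toNat = lovaszTheta (Paley F) := by
  subst hcard
  exact stmt13_general (isConferenceGraph_paley hq) hq25
    ((Int.ofNat_le.2 (cliqueNum_paley_le_stabilityNumber hq)).trans_lt halpha)
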